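/- arXiv:2102.07972 — 3 statements merged into one kernel-verified Lean document; each statement's English description precedes it below -/
import Mathlib

section
/- Error-feedback memory bound: under the stated recursion and compression assumption, for every t ≥ 0 one has E[‖r_t‖²] ≤ (4(1−δ)/δ²) γ² G². -/
open MeasureTheory

/-!
Write `e t = E‖r_t‖²` and `M = γ² G²`. Young's inequality with parameter `c > 0` and the contraction
property give the affine recursion
`e (t + 1) ≤ (1 - δ) (1 + c⁻¹) M + (1 - δ) (1 + c) e t`. Once its slope is less than `1`, `e` never
exceeds the fixed point `(1 - δ) (1 + c⁻¹) M / (1 - (1 - δ) (1 + c))`. For `c = δ / 2` the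
denominator is `δ (1 + δ) / 2` and the fixed point is
`4 (1 - δ) / δ² * ((1 + δ / 2) / (1 + δ)) * M ≤ 4 (1 - δ) / δ² * M`.
-/

lemma le_div_one_sub_of_le_mul_add {K : Type*} [Field K] [PartialOrder K] [IsOrderedRing K]
    {e : ℕ → K} {a b : K} (ha0 : 0 ≤ a) (ha1 : a ≠ 1) (h0 : e 0 ≤ b / (1 - a))
    (hstep : ∀ n, e (n + 1) ≤ a * e n + b) (n : ℕ) : e n ≤ b / (1 - a) := by
  have h1a : 1 - a ≠ 0 := sub_ne_zero.2 ha1.symm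
  have hmono : Monotone fun x => a * x + b := fun x y hxy => by dsimp only; gcongr
  have hfixed : a * (b / (1 - a)) + b = b / (1 - a) := by field_simp; ring
  exact hmono.seq_le_seq (y := fun _ => b / (1 - a)) n h0 (fun k _ => hstep k)
    fun _ _ => hfixed.le

section ErrorFeedback

variable {Ω E : Type*} {mΩ : MeasurableSpace Ω} {μ : Measure Ω} [SeminormedAddCommGroup E]

lemma norm_add_sq_le_young {c : ℝ} (hc : 0 < c) (x y : E) :
    ‖x + y‖ ^ 2 ≤ (1 + c⁻¹) * ‖x‖ ^ 2 + (1 + c) * ‖y‖ ^ 2 := by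
  have hsq : (1 + c⁻¹) * ‖x‖ ^ 2 + (1 + c) * ‖y‖ ^ 2
      = (‖x‖ + ‖y‖) ^ 2 + c⁻¹ * (‖x‖ - c * ‖y‖) ^ 2 := by
    field_simp
    ring
  calc ‖x + y‖ ^ 2 ≤ (‖x‖ + ‖y‖) ^ 2 := by gcongr; exact norm_add_le x y
    _ ≤ (‖x‖ + ‖y‖) ^ 2 + c⁻¹ * (‖x‖ - c * ‖y‖) ^ 2 := le_add_of_nonneg_right (by positivity)
    _ = (1 + c⁻¹) * ‖x‖ ^ 2 + (1 + c) * ‖y‖ ^ 2 := hsq.symm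

lemma integral_norm_add_sq_le_young {c : ℝ} (hc : 0 < c) {f g : Ω → E}
    (hf : Integrable (fun ω => ‖f ω‖ ^ 2) μ) (hg : Integrable (fun ω => ‖g ω‖ ^ 2) μ)
    (hfg : Integrable (fun ω => ‖f ω + g ω‖ ^ 2) μ) :
    ∫ ω, ‖f ω + g ω‖ ^ 2 ∂μ
      ≤ (1 + c⁻¹) * ∫ ω, ‖f ω‖ ^ 2 ∂μ + (1 + c) * ∫ ω, ‖g ω‖ ^ 2 ∂μ := by
  have hf' := hf.const_mul (1 + c⁻¹)
  have hg' := hg.const_mul (1 + c)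
  calc ∫ ω, ‖f ω + g ω‖ ^ 2 ∂μ
      ≤ ∫ ω, ((1 + c⁻¹) * ‖f ω‖ ^ 2 + (1 + c) * ‖g ω‖ ^ 2) ∂μ :=
        integral_mono hfg (hf'.add hg') fun ω => norm_add_sq_le_young hc (f ω) (g ω)
    _ = (1 + c⁻¹) * ∫ ω, ‖f ω‖ ^ 2 ∂μ + (1 + c) * ∫ ω, ‖g ω‖ ^ 2 ∂μ := by
        rw [integral_add hf' hg', integral_const_mul, integral_const_mul]

lemma integral_norm_sq_le_of_contraction {q c M : ℝ} (hq : 0 ≤ q) (hc : 0 < c)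
    (hqc : q * (1 + c) < 1) {v r : ℕ → Ω → E}
    (hv_int : ∀ t, Integrable (fun ω => ‖v t ω‖ ^ 2) μ)
    (hr_int : ∀ t, Integrable (fun ω => ‖r t ω‖ ^ 2) μ)
    (hvr_int : ∀ t, Integrable (fun ω => ‖v t ω + r t ω‖ ^ 2) μ)
    (hv : ∀ t, ∫ ω, ‖v t ω‖ ^ 2 ∂μ ≤ M) (hr0 : ∫ ω, ‖r 0 ω‖ ^ 2 ∂μ = 0)
    (hr : ∀ t, ∫ ω, ‖r (t + 1) ω‖ ^ 2 ∂μ ≤ q * ∫ ω, ‖v t ω + r t ω‖ ^ 2 ∂μ) (t : ℕ) :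
    ∫ ω, ‖r t ω‖ ^ 2 ∂μ ≤ q * (1 + c⁻¹) * M / (1 - q * (1 + c)) := by
  have hM : 0 ≤ M := (integral_nonneg fun _ => by positivity).trans (hv 0)
  have hinit : ∫ ω, ‖r 0 ω‖ ^ 2 ∂μ ≤ q * (1 + c⁻¹) * M / (1 - q * (1 + c)) :=
    hr0.trans_le (div_nonneg (by positivity) (sub_nonneg.2 hqc.le))
  refine le_div_one_sub_of_le_mul_add (e := fun t => ∫ ω, ‖r t ω‖ ^ 2 ∂μ) (by positivity) hqc.ne
    hinit (fun t => ?_) t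
  calc ∫ ω, ‖r (t + 1) ω‖ ^ 2 ∂μ ≤ q * ∫ ω, ‖v t ω + r t ω‖ ^ 2 ∂μ := hr t
    _ ≤ q * ((1 + c⁻¹) * ∫ ω, ‖v t ω‖ ^ 2 ∂μ + (1 + c) * ∫ ω, ‖r t ω‖ ^ 2 ∂μ) := by
        gcongr
        exact integral_norm_add_sq_le_young hc (hv_int t) (hr_int t) (hvr_int t)
    _ ≤ q * ((1 + c⁻¹) * M + (1 + c) * ∫ ω, ‖r t ω‖ ^ 2 ∂μ) := by gcongr; exact hv t
    _ = q * (1 + c) * ∫ ω, ‖r t ω‖ ^ 2 ∂μ + q * (1 + c⁻¹) * M := by ring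

lemma young_fixedPoint_le {δ M : ℝ} (hδ0 : 0 < δ) (hδ1 : δ ≤ 1) (hM : 0 ≤ M) :
    (1 - δ) * (1 + (δ / 2)⁻¹) * M / (1 - (1 - δ) * (1 + δ / 2)) ≤ 4 * (1 - δ) / δ ^ 2 * M := by
  have : 0 ≤ 1 - δ := sub_nonneg.2 hδ1
  have hden : 1 - (1 - δ) * (1 + δ / 2) = δ * (1 + δ) / 2 := by ring
  have hratio : (1 + δ / 2) / (1 + δ) ≤ 1 := (div_le_one (by positivity)).2 (by linarith)
  calc (1 - δ) * (1 + (δ / 2)⁻¹) * M / (1 - (1 - δ) * (1 + δ / 2))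
      = 4 * (1 - δ) / δ ^ 2 * M * ((1 + δ / 2) / (1 + δ)) := by
        rw [hden]
        field_simp
        ring
    _ ≤ 4 * (1 - δ) / δ ^ 2 * M := mul_le_of_le_one_right (by positivity) hratio

theorem error_feedback_memory_bound_general [NormedSpace ℝ E] {γ G δ : ℝ}
    (hδ0 : 0 < δ) (hδ1 : δ ≤ 1) {g u r Cu : ℕ → Ω → E}
    (hg2int : ∀ t, Integrable (fun ω => ‖g t ω‖ ^ 2) μ)
    (hu2int : ∀ t, Integrable (fun ω => ‖u t ω‖ ^ 2) μ)
    (hr2int : ∀ t, Integrable (fun ω => ‖r t ω‖ ^ 2) μ)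
    (hg2 : ∀ t, ∫ ω, ‖g t ω‖ ^ 2 ∂μ ≤ G ^ 2)
    (hr0 : ∀ ω, r 0 ω = 0)
    (hu : ∀ t ω, u t ω = γ • g t ω + r t ω)
    (hrrec : ∀ t ω, r (t + 1) ω = u t ω - Cu t ω)
    (hcontract : ∀ t, ∫ ω, ‖u t ω - Cu t ω‖ ^ 2 ∂μ ≤ (1 - δ) * ∫ ω, ‖u t ω‖ ^ 2 ∂μ) (t : ℕ) :
    ∫ ω, ‖r t ω‖ ^ 2 ∂μ ≤ 4 * (1 - δ) / δ ^ 2 * γ ^ 2 * G ^ 2 := by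
  have hnorm (t : ℕ) (ω : Ω) : ‖γ • g t ω‖ ^ 2 = γ ^ 2 * ‖g t ω‖ ^ 2 := by
    rw [norm_smul, mul_pow, Real.norm_eq_abs, sq_abs]
  have hslope : (1 - δ) * (1 + δ / 2) < 1 := by nlinarith [sq_nonneg δ]
  simp only [← hrrec] at hcontract
  simp only [hu] at hcontract hu2int
  calc ∫ ω, ‖r t ω‖ ^ 2 ∂μ
      ≤ (1 - δ) * (1 + (δ / 2)⁻¹) * (γ ^ 2 * G ^ 2) / (1 - (1 - δ) * (1 + δ / 2)) := by
        refine integral_norm_sq_le_of_contraction (sub_nonneg.2 hδ1) (half_pos hδ0) hslope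
          (v := fun t ω => γ • g t ω) (fun t => ?_) hr2int hu2int (fun t => ?_)
          (by simp [hr0]) hcontract t
        · simpa only [hnorm] using (hg2int t).const_mul (γ ^ 2)
        · simp only [hnorm, integral_const_mul]
          gcongr
          exact hg2 t
    _ ≤ 4 * (1 - δ) / δ ^ 2 * (γ ^ 2 * G ^ 2) := young_fixedPoint_le hδ0 hδ1 (by positivity)
    _ = 4 * (1 - δ) / δ ^ 2 * γ ^ 2 * G ^ 2 := by ring

end ErrorFeedback

/-- Error-feedback memory bound: let `γ > 0`, `G > 0`, `δ ∈ (0,1]`, let `(g_t)` be random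
vectors with `E[‖g_t‖²] ≤ G²`, and let the memory sequence be `r_0 = 0`,
`u_t = γ g_t + r_t`, `r_{t+1} = u_t − C_t(u_t)`, where the (possibly random) compression
operator satisfies the mean contraction property
`E[‖u_t − C_t(u_t)‖²] ≤ (1−δ)·E[‖u_t‖²]` (here `Cu t ω = C_t(u_t)(ω)`). Then for every
`t ≥ 0`, `E[‖r_t‖²] ≤ (4(1−δ)/δ²) γ² G²`. -/
theorem error_feedback_memory_bound {Ω : Type*} {mΩ : MeasurableSpace Ω}
    {μ : Measure Ω} [IsProbabilityMeasure μ] {d : ℕ}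
    (γ G δ : ℝ) (hγ : 0 < γ) (hG : 0 < G) (hδ0 : 0 < δ) (hδ1 : δ ≤ 1)
    (g u r Cu : ℕ → Ω → EuclideanSpace ℝ (Fin d))
    (hg2int : ∀ t, Integrable (fun ω => ‖g t ω‖ ^ 2) μ)
    (hu2int : ∀ t, Integrable (fun ω => ‖u t ω‖ ^ 2) μ)
    (hr2int : ∀ t, Integrable (fun ω => ‖r t ω‖ ^ 2) μ)
    (hg2 : ∀ t, ∫ ω, ‖g t ω‖ ^ 2 ∂μ ≤ G ^ 2)
    (hr0 : ∀ ω, r 0 ω = 0)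
    (hu : ∀ t ω, u t ω = γ • g t ω + r t ω)
    (hrrec : ∀ t ω, r (t + 1) ω = u t ω - Cu t ω)
    (hcontract : ∀ t, ∫ ω, ‖u t ω - Cu t ω‖ ^ 2 ∂μ ≤ (1 - δ) * ∫ ω, ‖u t ω‖ ^ 2 ∂μ) :
    ∀ t, ∫ ω, ‖r t ω‖ ^ 2 ∂μ ≤ 4 * (1 - δ) / δ ^ 2 * γ ^ 2 * G ^ 2 :=
  error_feedback_memory_bound_general hδ0 hδ1 hg2int hu2int hr2int hg2 hr0 hu hrrec hcontract
end

section
/- Single-user water-filling (Theorem 2): suppose λ > 0 satisfies Σ_{k=1}^K max{ (1/√λ)·√(x_k² σ²/h_k²) − σ²/h_k², 0 } = E. Define b_k* ≥ 0 by (b_k*)² = max{ √(σ²/(λ x_k² h_k²)) − σ²/(h_k² x_k²), 0 } and α_k* = b_k* h_k x_k² / (σ² + (b_k*)² h_k² x_k²). Then (b*, α*) is optimal for P2: for all b_k ≥ 0 and α_k ≥ 0 with Σ_{k=1}^K b_k² x_k² ≤ E, Σ_{k=1}^K ((α_k* b_k* h_k − 1) x_k)² + σ² Σ_{k=1}^K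 (α_k*)² ≤ Σ_{k=1}^K ((α_k b_k h_k − 1) x_k)² + σ² Σ_{k=1}^K α_k², and b* is feasible (Σ (b_k*)² x_k² ≤ E). -/
open Finset

/-!
For fixed power coefficients the objective separates into quadratics in the estimator coefficients;
completing the square shows that the best estimator leaves the error `w / (a + p)` in a coordinate
with transmit power `p = b² x²`, where `a = σ² / h²` and `w = x² σ² / h²`.

What remains is convex in the powers and is solved by Lagrangian duality. In terms of the level
`D = a + p` the Lagrangian `w / (a + p) + lam * p` is, up to a constant, `lam * (c² / D + D)` with
`c = √w / √lam`. On `D ≥ a` it is least at `D = max c a`, which is water-filling. The water-level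
equation says that these powers exhaust the budget, so the inequalities between Lagrangians add up
to an inequality between objectives.
-/

lemma isMinOn_sq_div_add_self {𝕜 : Type*} [Field 𝕜] [LinearOrder 𝕜] [IsStrictOrderedRing 𝕜]
    {c t : 𝕜} (hc : 0 ≤ c) (ht : 0 < t) :
    IsMinOn (fun D ↦ c ^ 2 / D + D) (Set.Ici t) (max c t) := by
  refine isMinOn_iff.2 fun D (hD : t ≤ D) ↦ ?_
  have hD_pos : 0 < D := ht.trans_le hD
  have gap_eq : c ^ 2 / D + D - (c ^ 2 / max c t + max c t)
      = (D - max c t) * (D * max c t - c ^ 2) / (D * max c t) := by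
    field_simp
    ring
  have gap_num_nonneg : 0 ≤ (D - max c t) * (D * max c t - c ^ 2) := by
    rcases le_total t c with htc | hct
    · rw [max_eq_left htc]
      calc 0 ≤ c * (D - c) ^ 2 := by positivity
        _ = (D - c) * (D * c - c ^ 2) := by ring
    · rw [max_eq_right hct, sq]
      exact mul_nonneg (sub_nonneg.2 hD)
        (sub_nonneg.2 (mul_le_mul (hct.trans hD) hct hc hD_pos.le))
  exact sub_nonneg.1 (gap_eq ▸ div_nonneg gap_num_nonneg (by positivity))

/-- The water-filling power of a channel whose error at transmit power `p` is `w / (a + p)`, at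
price `lam` per unit of power: it fills the floor `a` up to the level `√w / √lam`, if that is
higher. -/
noncomputable def waterfillingPower (lam w a : ℝ) : ℝ :=
  max (1 / √lam * √w - a) 0

lemma isMinOn_waterfillingPower {lam w a : ℝ} (hlam : 0 < lam) (hw : 0 ≤ w) (ha : 0 < a) :
    IsMinOn (fun p ↦ w / (a + p) + lam * p) (Set.Ici 0) (waterfillingPower lam w a) := by
  refine isMinOn_iff.2 fun p (hp : 0 ≤ p) ↦ ?_
  set c := 1 / √lam * √w with hc
  have hw_eq : w = lam * c ^ 2 := by
    rw [hc, mul_pow, div_pow, one_pow, Real.sq_sqrt hlam.le, Real.sq_sqrt hw]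
    field_simp
  have lagrangian_eq (q : ℝ) :
      w / (a + q) + lam * q = lam * (c ^ 2 / (a + q) + (a + q)) - lam * a := by
    rw [hw_eq]
    ring
  have level_eq : a + waterfillingPower lam w a = max c a := by
    rw [waterfillingPower, ← max_add_add_left, add_sub_cancel, add_zero]
  rw [lagrangian_eq, lagrangian_eq, level_eq]
  gcongr lam * ?_ - _
  exact isMinOn_iff.1 (isMinOn_sq_div_add_self (by positivity) ha) (a + p)
    (le_add_of_nonneg_right hp)

lemma max_sqrt_sub_mul_sq_eq_waterfillingPower {h x : ℝ} (σ lam : ℝ) (hx : x ≠ 0) :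
    max (√(σ ^ 2 / (lam * x ^ 2 * h ^ 2)) - σ ^ 2 / (h ^ 2 * x ^ 2)) 0 * x ^ 2
      = waterfillingPower lam (x ^ 2 * σ ^ 2 / h ^ 2) (σ ^ 2 / h ^ 2) := by
  have level_eq : √(σ ^ 2 / (lam * x ^ 2 * h ^ 2)) * x ^ 2
      = 1 / √lam * √(x ^ 2 * σ ^ 2 / h ^ 2) := by
    calc √(σ ^ 2 / (lam * x ^ 2 * h ^ 2)) * x ^ 2
        = √(σ ^ 2 / (lam * x ^ 2 * h ^ 2) * (x ^ 2) ^ 2) := by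
          rw [Real.sqrt_mul' _ (by positivity), Real.sqrt_sq (by positivity)]
      _ = √(x ^ 2 * σ ^ 2 / h ^ 2 / lam) := by
          congr 1
          field_simp
      _ = 1 / √lam * √(x ^ 2 * σ ^ 2 / h ^ 2) := by
          rw [Real.sqrt_div (by positivity), div_eq_mul_one_div, mul_comm]
  have floor_eq : σ ^ 2 / (h ^ 2 * x ^ 2) * x ^ 2 = σ ^ 2 / h ^ 2 := by
    field_simp
  rw [waterfillingPower, max_mul_of_nonneg _ _ (sq_nonneg x), sub_mul, zero_mul, level_eq,
    floor_eq]

/-- The contribution of one coordinate to the objective: the mean squared error of `α * y` as an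
estimate of `x`, where `y` is `h * b * x` plus noise of variance `σ ^ 2`. -/
def channelMSE (h x σ b α : ℝ) : ℝ :=
  ((α * b * h - 1) * x) ^ 2 + σ ^ 2 * α ^ 2

/-- The Wiener (linear minimum mean squared error) coefficient for the power coefficient `b`. -/
noncomputable def wienerCoeff (h x σ b : ℝ) : ℝ :=
  b * h * x ^ 2 / (σ ^ 2 + b ^ 2 * h ^ 2 * x ^ 2)

lemma channelMSE_eq_add_sq {σ : ℝ} (hσ : σ ≠ 0) (h x b α : ℝ) :
    channelMSE h x σ b α = x ^ 2 * σ ^ 2 / (σ ^ 2 + b ^ 2 * h ^ 2 * x ^ 2)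
      + (σ ^ 2 + b ^ 2 * h ^ 2 * x ^ 2) * (α - wienerCoeff h x σ b) ^ 2 := by
  have : σ ^ 2 + b ^ 2 * h ^ 2 * x ^ 2 ≠ 0 := by positivity
  rw [channelMSE, wienerCoeff]
  field_simp
  ring

lemma channelMSE_wienerCoeff_le {σ : ℝ} (hσ : σ ≠ 0) (h x b α : ℝ) :
    channelMSE h x σ b (wienerCoeff h x σ b) ≤ channelMSE h x σ b α := by
  rw [channelMSE_eq_add_sq hσ, channelMSE_eq_add_sq hσ h x b α, sub_self, zero_pow two_ne_zero,
    mul_zero]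
  gcongr
  positivity

lemma channelMSE_wienerCoeff {h σ : ℝ} (hh : h ≠ 0) (hσ : σ ≠ 0) (x b : ℝ) :
    channelMSE h x σ b (wienerCoeff h x σ b)
      = x ^ 2 * σ ^ 2 / h ^ 2 / (σ ^ 2 / h ^ 2 + b ^ 2 * x ^ 2) := by
  rw [channelMSE_eq_add_sq hσ, sub_self, zero_pow two_ne_zero, mul_zero, add_zero]
  field_simp

lemma channelMSE_add_mul_power_le {h x σ lam b₀ : ℝ} (hh : h ≠ 0) (hσ : σ ≠ 0) (hlam : 0 < lam)
    (hb₀ : b₀ ^ 2 * x ^ 2 = waterfillingPower lam (x ^ 2 * σ ^ 2 / h ^ 2) (σ ^ 2 / h ^ 2))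
    (b α : ℝ) :
    channelMSE h x σ b₀ (wienerCoeff h x σ b₀) + lam * (b₀ ^ 2 * x ^ 2)
      ≤ channelMSE h x σ b α + lam * (b ^ 2 * x ^ 2) := by
  calc channelMSE h x σ b₀ (wienerCoeff h x σ b₀) + lam * (b₀ ^ 2 * x ^ 2)
      ≤ channelMSE h x σ b (wienerCoeff h x σ b) + lam * (b ^ 2 * x ^ 2) := by
        rw [channelMSE_wienerCoeff hh hσ, channelMSE_wienerCoeff hh hσ, hb₀]
        exact isMinOn_iff.1 (isMinOn_waterfillingPower hlam (by positivity) (by positivity))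
          (b ^ 2 * x ^ 2) (Set.mem_Ici.2 (by positivity))
    _ ≤ channelMSE h x σ b α + lam * (b ^ 2 * x ^ 2) := by
        gcongr
        exact channelMSE_wienerCoeff_le hσ h x b α

lemma sum_le_sum_of_add_mul_le_add_mul {ι R : Type*} [Ring R] [PartialOrder R] [IsOrderedRing R]
    {s : Finset ι} {f g p q : ι → R} {lam : R} (hlam : 0 ≤ lam)
    (hfg : ∀ k ∈ s, f k + lam * p k ≤ g k + lam * q k) (hqp : ∑ k ∈ s, q k ≤ ∑ k ∈ s, p k) :
    ∑ k ∈ s, f k ≤ ∑ k ∈ s, g k := by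
  have hsum := sum_le_sum hfg
  simp only [sum_add_distrib, ← mul_sum] at hsum
  exact le_of_add_le_add_right (hsum.trans (by gcongr))

theorem single_user_waterfilling_general {ι : Type*} [Fintype ι] {h x : ι → ℝ}
    (hh : ∀ k, h k ≠ 0) (hx : ∀ k, x k ≠ 0) {σ E lam : ℝ} (hσ : σ ≠ 0) (hlam : 0 < lam)
    (hwater : ∑ k, max ((1 / √lam) * √(x k ^ 2 * σ ^ 2 / h k ^ 2) - σ ^ 2 / h k ^ 2) 0 = E)
    {bstar αstar : ι → ℝ}
    (hbstar : ∀ k, bstar k ^ 2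
      = max (√(σ ^ 2 / (lam * x k ^ 2 * h k ^ 2)) - σ ^ 2 / (h k ^ 2 * x k ^ 2)) 0)
    (hαstar : ∀ k, αstar k
      = bstar k * h k * x k ^ 2 / (σ ^ 2 + bstar k ^ 2 * h k ^ 2 * x k ^ 2)) :
    ∑ k, bstar k ^ 2 * x k ^ 2 = E ∧ ∀ b α : ι → ℝ, ∑ k, b k ^ 2 * x k ^ 2 ≤ E →
      ∑ k, ((αstar k * bstar k * h k - 1) * x k) ^ 2 + σ ^ 2 * ∑ k, αstar k ^ 2
        ≤ ∑ k, ((α k * b k * h k - 1) * x k) ^ 2 + σ ^ 2 * ∑ k, α k ^ 2 := by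
  have power_eq (k : ι) : bstar k ^ 2 * x k ^ 2
      = waterfillingPower lam (x k ^ 2 * σ ^ 2 / h k ^ 2) (σ ^ 2 / h k ^ 2) := by
    rw [hbstar, max_sqrt_sub_mul_sq_eq_waterfillingPower σ lam (hx k)]
  have budget_eq : ∑ k, bstar k ^ 2 * x k ^ 2 = E :=
    (sum_congr rfl fun k _ ↦ power_eq k).trans hwater
  refine ⟨budget_eq, fun b α hb ↦ ?_⟩
  obtain rfl : αstar = fun k ↦ wienerCoeff (h k) (x k) σ (bstar k) := funext hαstar
  simp only [mul_sum, ← sum_add_distrib]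
  exact sum_le_sum_of_add_mul_le_add_mul hlam.le
    (fun k _ ↦ channelMSE_add_mul_power_le (hh k) hσ hlam (power_eq k) (b k) (α k))
    (hb.trans_eq budget_eq.symm)

/-- Single-user water-filling (Theorem 2 of the paper): given channel gains `h_k > 0`,
nonzero gradient coordinates `x_k ≠ 0`, noise standard deviation `σ > 0` and power
budget `E > 0`, suppose the water level `λ > 0` satisfies
`Σ_k max{ (1/√λ)·√(x_k²σ²/h_k²) − σ²/h_k², 0 } = E`. Define `b_k* ≥ 0` by
`(b_k*)² = max{ √(σ²/(λ x_k² h_k²)) − σ²/(h_k² x_k²), 0 }` and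
`α_k* = b_k* h_k x_k² / (σ² + (b_k*)² h_k² x_k²)`. Then `(b*, α*)` is feasible and
optimal for the single-user MSE minimization problem P2. -/
theorem single_user_waterfilling {K : ℕ} (hK : 1 ≤ K)
    (h x : Fin K → ℝ) (hh : ∀ k, 0 < h k) (hx : ∀ k, x k ≠ 0)
    (σ E lam : ℝ) (hσ : 0 < σ) (hE : 0 < E) (hlam : 0 < lam)
    (hwater : ∑ k, max ((1 / Real.sqrt lam) * Real.sqrt ((x k) ^ 2 * σ ^ 2 / (h k) ^ 2)
        - σ ^ 2 / (h k) ^ 2) 0 = E)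
    (bstar αstar : Fin K → ℝ)
    (hbstar : ∀ k, bstar k
      = Real.sqrt (max (Real.sqrt (σ ^ 2 / (lam * (x k) ^ 2 * (h k) ^ 2))
          - σ ^ 2 / ((h k) ^ 2 * (x k) ^ 2)) 0))
    (hαstar : ∀ k, αstar k
      = bstar k * h k * (x k) ^ 2 / (σ ^ 2 + (bstar k) ^ 2 * (h k) ^ 2 * (x k) ^ 2)) :
    (∑ k, (bstar k) ^ 2 * (x k) ^ 2 ≤ E)
    ∧ ∀ b α : Fin K → ℝ, (∀ k, 0 ≤ b k) → (∀ k, 0 ≤ α k) →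
        ∑ k, (b k) ^ 2 * (x k) ^ 2 ≤ E →
        ∑ k, ((αstar k * bstar k * h k - 1) * x k) ^ 2 + σ ^ 2 * ∑ k, (αstar k) ^ 2
          ≤ ∑ k, ((α k * b k * h k - 1) * x k) ^ 2 + σ ^ 2 * ∑ k, (α k) ^ 2 := by
  obtain ⟨budget_eq, optimal⟩ := single_user_waterfilling_general (fun k ↦ (hh k).ne') hx hσ.ne'
    hlam hwater (fun k ↦ by rw [hbstar, Real.sq_sqrt (le_max_right _ _)]) hαstar
  exact ⟨budget_eq.le, fun b α _ _ ↦ optimal b α⟩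
end

section
/- Water-filling optimality for the reduced convex problem P2-1: let h̃_k > 0, x̃_k > 0 (k = 1,…,K), E > 0, and λ > 0, and define b̃_k* = max{ √(h̃_k x̃_k/λ) − x̃_k, 0 } / h̃_k. If Σ_{k=1}^K b̃_k*/x̃_k = E, then b̃* minimizes Σ_{k=1}^K 1/(b̃_k h̃_k + x̃_k) over all b̃_k ≥ 0 satisfying Σ_{k=1}^K b̃_k/x̃_k ≤ E. -/
open Finset

/-!
Lagrangian sufficiency: with multiplier `lam`, the Lagrangian `∑ 1/(b h + x) + lam ∑ b/x` splits
over the coordinates. In terms of the level `s = b h + x ≥ x` and of `r = √(h x / lam)`, each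
summand is, up to a constant, the convex function `1/s + s/r²`, whose minimizer over `s ≥ x` is its
unconstrained minimizer `r` clamped to `[x, ∞)`; this is the level of the water-filling allocation.
-/

section LinearOrderedField

variable {𝕜 : Type*} [Field 𝕜] [LinearOrder 𝕜] [IsStrictOrderedRing 𝕜] {m r s x : 𝕜}

lemma one_div_sub_div_sq_le_one_div (hm : 0 < m) (hs : 0 < s) :
    1 / m - (s - m) / m ^ 2 ≤ 1 / s := by
  have hgap : 1 / s - (1 / m - (s - m) / m ^ 2) = (s - m) ^ 2 / (s * m ^ 2) := by
    field_simp
    ring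
  rw [← sub_nonneg, hgap]
  positivity

lemma one_div_max_add_div_sq_le (hr : 0 < r) (hs : 0 < s) (hxs : x ≤ s) :
    1 / max r x + max r x / r ^ 2 ≤ 1 / s + s / r ^ 2 := by
  -- First-order optimality: the derivative `1/r² - 1/m²` of the objective at `m = max r x`
  -- vanishes if `m = r`; if `m = x ≥ r`, it is nonnegative and only moves to the right are allowed.
  have hslope : 0 ≤ (s - max r x) * (1 / r ^ 2 - 1 / max r x ^ 2) := by
    rcases le_total x r with hxr | hrx
    · simp [max_eq_left hxr]
    · rw [max_eq_right hrx]
      have hinv : 1 / x ^ 2 ≤ 1 / r ^ 2 := by gcongr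
      exact mul_nonneg (sub_nonneg.2 hxs) (sub_nonneg.2 hinv)
  have htangent := one_div_sub_div_sq_le_one_div (lt_max_of_lt_left hr : 0 < max r x) hs
  linear_combination hslope + htangent

end LinearOrderedField

lemma sum_le_sum_of_lagrangian_le {ι R : Type*} [Ring R] [PartialOrder R] [IsOrderedRing R]
    {s : Finset ι} {f f' g g' : ι → R} {c : R} (hc : 0 ≤ c)
    (hL : ∀ i ∈ s, f i + c * g i ≤ f' i + c * g' i) (hg : ∑ i ∈ s, g' i ≤ ∑ i ∈ s, g i) :
    ∑ i ∈ s, f i ≤ ∑ i ∈ s, f' i := by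
  refine le_of_add_le_add_right (a := c * ∑ i ∈ s, g i) ?_
  calc ∑ i ∈ s, f i + c * ∑ i ∈ s, g i
      = ∑ i ∈ s, (f i + c * g i) := by rw [sum_add_distrib, mul_sum]
    _ ≤ ∑ i ∈ s, (f' i + c * g' i) := sum_le_sum hL
    _ = ∑ i ∈ s, f' i + c * ∑ i ∈ s, g' i := by rw [sum_add_distrib, mul_sum]
    _ ≤ ∑ i ∈ s, f' i + c * ∑ i ∈ s, g i := by gcongr

/-- The water-filling allocation `b̃*` of a single coordinate with gain `h = h̃`, offset `x = x̃`
and multiplier `lam = λ`, meaningful when all three are positive. -/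
noncomputable def waterfilling (h x lam : ℝ) : ℝ :=
  max (√(h * x / lam) - x) 0 / h

lemma waterfilling_mul_add {h : ℝ} (hh : h ≠ 0) (x lam : ℝ) :
    waterfilling h x lam * h + x = max √(h * x / lam) x := by
  rw [waterfilling, div_mul_cancel₀ _ hh, max_add, sub_add_cancel, zero_add]

lemma waterfilling_lagrangian_le {h x lam b : ℝ} (hh : 0 < h) (hx : 0 < x) (hlam : 0 < lam)
    (hb : 0 ≤ b) :
    1 / (waterfilling h x lam * h + x) + lam * (waterfilling h x lam / x) ≤
      1 / (b * h + x) + lam * (b / x) := by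
  have hratio : 0 < h * x / lam := by positivity
  have hlevel : x ≤ b * h + x := le_add_of_nonneg_left (by positivity)
  have hcost (y : ℝ) : lam * (y / x) = (y * h + x) / √(h * x / lam) ^ 2 - lam / h := by
    rw [Real.sq_sqrt hratio.le]
    field_simp
    ring
  have hmin := one_div_max_add_div_sq_le (Real.sqrt_pos.2 hratio) (hx.trans_le hlevel) hlevel
  rw [← waterfilling_mul_add hh.ne'] at hmin
  rw [hcost, hcost b]
  linarith

theorem waterfilling_reduced_problem_general {ι : Type*} {s : Finset ι} {h x b : ι → ℝ} {lam : ℝ}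
    (hh : ∀ i ∈ s, 0 < h i) (hx : ∀ i ∈ s, 0 < x i) (hlam : 0 < lam) (hb : ∀ i ∈ s, 0 ≤ b i)
    (hbudget : ∑ i ∈ s, b i / x i ≤ ∑ i ∈ s, waterfilling (h i) (x i) lam / x i) :
    ∑ i ∈ s, 1 / (waterfilling (h i) (x i) lam * h i + x i) ≤
      ∑ i ∈ s, 1 / (b i * h i + x i) :=
  sum_le_sum_of_lagrangian_le hlam.le
    (fun i hi => waterfilling_lagrangian_le (hh i hi) (hx i hi) hlam (hb i hi)) hbudget

/-- Water-filling optimality for the reduced convex problem P2-1 (obtained from the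
single-user problem P2 by the substitution `b̃_k = b_k²`, `h̃_k = h_k²/σ²`,
`x̃_k = 1/x_k²`): let `h̃_k > 0`, `x̃_k > 0`, `E > 0`, `λ > 0`, and define
`b̃_k* = max{ √(h̃_k x̃_k/λ) − x̃_k, 0 } / h̃_k`. If `Σ b̃_k*/x̃_k = E`, then `b̃*`
minimizes `Σ 1/(b̃_k h̃_k + x̃_k)` over all `b̃_k ≥ 0` with `Σ b̃_k/x̃_k ≤ E`. -/
theorem waterfilling_reduced_problem {K : ℕ} (hK : 1 ≤ K)
    (ht hx : Fin K → ℝ) (hht : ∀ k, 0 < ht k) (hhx : ∀ k, 0 < hx k)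
    (E lam : ℝ) (hE : 0 < E) (hlam : 0 < lam)
    (bstar : Fin K → ℝ)
    (hbstar : ∀ k, bstar k = max (Real.sqrt (ht k * hx k / lam) - hx k) 0 / ht k)
    (hsat : ∑ k, bstar k / hx k = E) :
    ∀ b : Fin K → ℝ, (∀ k, 0 ≤ b k) → ∑ k, b k / hx k ≤ E →
      ∑ k, 1 / (bstar k * ht k + hx k) ≤ ∑ k, 1 / (b k * ht k + hx k) := by
  intro b hb hbE
  obtain rfl : bstar = fun k => waterfilling (ht k) (hx k) lam := funext hbstar
  exact waterfilling_reduced_problem_general (fun k _ => hht k) (fun k _ => hhx k) hlam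
    (fun k _ => hb k) (hbE.trans hsat.ge)
end
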